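/- arXiv:1807.07184 — 2 statements merged into one kernel-verified Lean document; each statement's English description precedes it below -/
import Mathlib

section
/- Let N, P be positive integers, let V be an N×N real orthogonal matrix (Vᵀ V = I_N), let K ⊆ {1,…,N} be a set of indices with |K| = k, and let X̄ ∈ ℝ^{N×P} be a matrix whose i-th row is zero for every i ∉ K. Let N' ∈ ℝ^{N×P} be a noise matrix each of whose columns has Euclidean norm at most ε ≥ 0, and set Y = V X̄ + N' and Ȳ = Vᵀ Y. If min_{i ∈ K} ‖X̄(i,:)‖₂ > 2 ε √P, then for every i ∈ K and every j ∉ K one has ‖Ȳ(i,:)‖₂ > ‖Ȳ(j,:)‖₂; in particular K is exactly the set of indices of the k rows of Ȳ with largest ℓ₂ norm. -/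
open Matrix Finset

/-- ℓ₂ norm of a row vector. -/
noncomputable def rowNorm {P : ℕ} (v : Fin P → ℝ) : ℝ := Real.sqrt (∑ p, v p ^ 2)

/-!
Since `Vᴴ * V = 1`, the transformed data are `Vᴴ * (V * X + N) = X + Vᴴ * N`. The entries of row `i`
of `Vᴴ * N` are the inner products of a unit vector, the `i`-th column of `V`, with the columns of
`N`, so by Cauchy–Schwarz this row has norm at most `ε * √P`. A gap larger than `2 * ε * √P`
between two rows of `X` therefore survives the perturbation.
-/

section

open WithLp (toLp)

theorem norm_add_lt_norm_add_of_norm_le {E : Type*} [SeminormedAddCommGroup E] {x y u v : E}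
    {δ : ℝ} (hu : ‖u‖ ≤ δ) (hv : ‖v‖ ≤ δ) (h : ‖x‖ + 2 * δ < ‖y‖) : ‖x + u‖ < ‖y + v‖ := by
  have hxu : ‖x + u‖ ≤ ‖x‖ + ‖u‖ := norm_add_le x u
  have hyv : ‖y‖ ≤ ‖y + v‖ + ‖v‖ := norm_le_add_norm_add y v
  linarith

theorem norm_le_mul_sqrt_card_of_forall_norm_le {ι : Type*} [Fintype ι] {E : ι → Type*}
    [∀ i, SeminormedAddCommGroup (E i)] {x : PiLp 2 E} {r : ℝ} (hx : ∀ i, ‖x i‖ ≤ r) :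
    ‖x‖ ≤ r * √(Fintype.card ι) := by
  rcases isEmpty_or_nonempty ι with _ | ⟨⟨i⟩⟩
  · simp [PiLp.norm_eq_of_L2]
  have hr : 0 ≤ r := (norm_nonneg _).trans (hx i)
  calc ‖x‖ = √(∑ i, ‖x i‖ ^ 2) := PiLp.norm_eq_of_L2 x
    _ ≤ √(∑ _i : ι, r ^ 2) := by gcongr with i; exact hx i
    _ = r * √(Fintype.card ι) := by simp [Real.sqrt_sq hr, mul_comm]

variable {m n p 𝕜 : Type*} [RCLike 𝕜] [Fintype m]

theorem inner_toLp_col_toLp_col (A : Matrix m n 𝕜) (B : Matrix m p 𝕜) (i : n) (j : p) :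
    inner 𝕜 (toLp 2 (A.col i)) (toLp 2 (B.col j)) = (Aᴴ * B) i j :=
  (EuclideanSpace.inner_toLp_toLp _ _).trans (dotProduct_comm _ _)

theorem norm_conjTranspose_mul_apply_le (A : Matrix m n 𝕜) (B : Matrix m p 𝕜) (i : n) (j : p) :
    ‖(Aᴴ * B) i j‖ ≤ ‖toLp 2 (A.col i)‖ * ‖toLp 2 (B.col j)‖ :=
  inner_toLp_col_toLp_col A B i j ▸ norm_inner_le_norm _ _

theorem norm_toLp_col_eq_one_of_conjTranspose_mul_self [DecidableEq n] {V : Matrix m n 𝕜}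
    (hV : Vᴴ * V = 1) (i : n) : ‖toLp 2 (V.col i)‖ = 1 := by
  rw [norm_eq_sqrt_re_inner (𝕜 := 𝕜), inner_toLp_col_toLp_col, hV, Matrix.one_apply_eq,
    RCLike.one_re, Real.sqrt_one]

variable [Fintype p] {N : Matrix m p 𝕜} {ε : ℝ}

theorem norm_toLp_conjTranspose_mul_row_le (A : Matrix m n 𝕜)
    (hN : ∀ q, ‖toLp 2 (N.col q)‖ ≤ ε) (i : n) :
    ‖toLp 2 ((Aᴴ * N) i)‖ ≤ ‖toLp 2 (A.col i)‖ * ε * √(Fintype.card p) :=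
  norm_le_mul_sqrt_card_of_forall_norm_le fun q ↦
    calc ‖(Aᴴ * N) i q‖ ≤ ‖toLp 2 (A.col i)‖ * ‖toLp 2 (N.col q)‖ :=
          norm_conjTranspose_mul_apply_le A N i q
      _ ≤ ‖toLp 2 (A.col i)‖ * ε := by gcongr; exact hN q

theorem stmt0_general [Fintype n] [DecidableEq n] {V : Matrix m n 𝕜} (hV : Vᴴ * V = 1)
    (X : Matrix n p 𝕜) (hN : ∀ q, ‖toLp 2 (N.col q)‖ ≤ ε) {i j : n}
    (hij : ‖toLp 2 (X j)‖ + 2 * ε * √(Fintype.card p) < ‖toLp 2 (X i)‖) :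
    ‖toLp 2 ((Vᴴ * (V * X + N)) j)‖ < ‖toLp 2 ((Vᴴ * (V * X + N)) i)‖ := by
  have hrow (l : n) :
      toLp 2 ((Vᴴ * (V * X + N)) l) = toLp 2 (X l) + toLp 2 ((Vᴴ * N) l) := by
    rw [Matrix.mul_add, ← Matrix.mul_assoc, hV, Matrix.one_mul, ← WithLp.toLp_add]
    rfl
  have hnoise (l : n) : ‖toLp 2 ((Vᴴ * N) l)‖ ≤ ε * √(Fintype.card p) := by
    simpa only [norm_toLp_col_eq_one_of_conjTranspose_mul_self hV, one_mul] using
      norm_toLp_conjTranspose_mul_row_le V hN l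
  rw [mul_assoc] at hij
  rw [hrow, hrow]
  exact norm_add_lt_norm_add_of_norm_le (hnoise j) (hnoise i) hij

theorem rowNorm_eq_norm_toLp {P : ℕ} (v : Fin P → ℝ) : rowNorm v = ‖toLp 2 v‖ := by
  simp only [rowNorm, EuclideanSpace.norm_eq, Real.norm_eq_abs, sq_abs]

end

/-- Theorem 2 (support identifiability): if the minimum on-support row norm of the
bandlimited GFT matrix exceeds `2 ε √P`, then every on-support row of `Ȳ = Vᵀ Y`
has strictly larger ℓ₂ norm than every off-support row. -/
theorem stmt0 {N P k : ℕ} (hN : 0 < N) (hP : 0 < P)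
    (V : Matrix (Fin N) (Fin N) ℝ) (hV : Vᵀ * V = 1)
    (K : Finset (Fin N)) (hK : K.card = k)
    (Xb : Matrix (Fin N) (Fin P) ℝ) (hsupp : ∀ i, i ∉ K → Xb i = 0)
    (Nn : Matrix (Fin N) (Fin P) ℝ) (ε : ℝ) (hε : 0 ≤ ε)
    (hnoise : ∀ p, Real.sqrt (∑ i, Nn i p ^ 2) ≤ ε)
    (Y : Matrix (Fin N) (Fin P) ℝ) (hY : Y = V * Xb + Nn)
    (Yb : Matrix (Fin N) (Fin P) ℝ) (hYb : Yb = Vᵀ * Y)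
    (hmin : ∀ i ∈ K, 2 * ε * Real.sqrt P < rowNorm (Xb i)) :
    ∀ i ∈ K, ∀ j, j ∉ K → rowNorm (Yb j) < rowNorm (Yb i) := by
  intro i hi j hj
  subst hY hYb
  have hcol (p : Fin P) : ‖WithLp.toLp 2 (Nn.col p)‖ ≤ ε :=
    (rowNorm_eq_norm_toLp _).symm.trans_le (hnoise p)
  have hgap : ‖WithLp.toLp 2 (Xb j)‖ + 2 * ε * √(Fintype.card (Fin P)) <
      ‖WithLp.toLp 2 (Xb i)‖ := by
    simpa [hsupp j hj, rowNorm_eq_norm_toLp] using hmin i hi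
  simpa only [rowNorm_eq_norm_toLp, conjTranspose_eq_transpose_of_trivial] using
    stmt0_general (by rwa [conjTranspose_eq_transpose_of_trivial]) Xb hcol hgap
end

section
/- Let N, P be positive integers, let V be an N×N real orthogonal matrix (Vᵀ V = I_N), let K ⊆ {1,…,N} with |K| = k, and let X̄ ∈ ℝ^{N×P} have i-th row zero for every i ∉ K. Let N' ∈ ℝ^{N×P} have every column of Euclidean norm at most ε ≥ 0, and set Ȳ = Vᵀ(V X̄ + N'). Assume min_{i ∈ K} ‖X̄(i,:)‖₂ > 2 ε √P. Then every minimizer Z of the Frobenius norm ‖Z − Ȳ‖_F over all matrices Z ∈ ℝ^{N×P} having at most k nonzero rows satisfies: the set of indices of nonzero rows of Z equals K. -/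
open Matrix Finset

/-- Frobenius norm of a matrix. -/
noncomputable def froNorm {N P : ℕ} (M : Matrix (Fin N) (Fin P) ℝ) : ℝ :=
  Real.sqrt (∑ i, ∑ p, M i p ^ 2)

/- Since `Vᵀ V = 1`, the data are `Ȳ = X̄ + Vᵀ N'`. The columns of `V` are unit vectors, so by
Cauchy–Schwarz every entry of `Vᵀ N'` is at most `ε` in absolute value and every row at most
`ε √P` in norm. Hence `ε √P` separates the rows of `Ȳ` indexed by `K` from all the others. A best
approximation of `Ȳ` by matrices with at most `|K|` nonzero rows captures at least as much energy
`∑ ‖Ȳ(i,:)‖²` on its support `S` as `Ȳ` has on `K`, whereas exchanging the indices of `S \ K` for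
those of `K \ S` would strictly increase that energy unless `S = K`. -/

section Exchange

variable {ι M : Type*} [AddCommMonoid M] [PartialOrder M] [IsOrderedCancelAddMonoid M]

theorem sum_lt_sum_of_card_le_of_threshold {S K : Finset ι} {r : ι → M} {c : M} (hc : 0 ≤ c)
    (hcard : #S ≤ #K) (hne : S ≠ K) (hout : ∀ i ∉ K, r i ≤ c) (hin : ∀ i ∈ K, c < r i) :
    ∑ i ∈ S, r i < ∑ i ∈ K, r i := by
  classical
  have hKS : (K \ S).Nonempty :=
    sdiff_nonempty.mpr fun h => hne (eq_of_subset_of_card_le h hcard).symm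
  rw [← sum_sdiff_lt_sum_sdiff]
  calc ∑ i ∈ S \ K, r i
      ≤ #(S \ K) • c := sum_le_card_nsmul _ _ _ fun i hi => hout i (mem_sdiff.mp hi).2
    _ ≤ #(K \ S) • c := nsmul_le_nsmul_left hc (card_sdiff_le_card_sdiff_iff.mpr hcard)
    _ = ∑ _i ∈ K \ S, c := (sum_const c).symm
    _ < ∑ i ∈ K \ S, r i := sum_lt_sum_of_nonempty hKS fun i hi => hin i (mem_sdiff.mp hi).1

end Exchange

section SparseApproximation

variable {ι E : Type*} [Fintype ι] [SeminormedAddCommGroup E]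

/-- `z` is a best approximation of the family of blocks `y` by families with at most `k` nonzero
blocks, that is, a solution of the block-sparse denoising problem with data `y`. The error is the
sum of the `q`-th powers of the block error norms; for the Frobenius norm, `q = 2` and the blocks
are the rows. -/
def IsBestSparseApprox (q k : ℕ) (y z : ι → E) : Prop :=
  (Function.support z).ncard ≤ k ∧ ∀ w : ι → E, (Function.support w).ncard ≤ k →
    ∑ i, ‖z i - y i‖ ^ q ≤ ∑ i, ‖w i - y i‖ ^ q

variable {q k : ℕ} {y z : ι → E}

theorem sum_norm_indicator_sub_pow [DecidableEq ι] (hq : q ≠ 0) (T : Finset ι) :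
    ∑ i, ‖(T : Set ι).indicator y i - y i‖ ^ q = ∑ i ∈ Tᶜ, ‖y i‖ ^ q := by
  rw [← sum_compl_add_sum T, sum_eq_zero (s := T) fun i hi => by simp [hi, hq], add_zero]
  exact sum_congr rfl fun i hi => by simp [mem_compl.mp hi]

theorem sum_compl_norm_pow_le_of_support_subset [DecidableEq ι] {S : Finset ι}
    (hS : Function.support z ⊆ S) :
    ∑ i ∈ Sᶜ, ‖y i‖ ^ q ≤ ∑ i, ‖z i - y i‖ ^ q := by
  have hz : ∀ i ∈ Sᶜ, z i = 0 := fun i hi =>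
    Function.notMem_support.mp fun h => mem_compl.mp hi (hS h)
  calc ∑ i ∈ Sᶜ, ‖y i‖ ^ q
      = ∑ i ∈ Sᶜ, ‖z i - y i‖ ^ q := sum_congr rfl fun i hi => by simp [hz i hi]
    _ ≤ ∑ i, ‖z i - y i‖ ^ q := sum_le_univ_sum_of_nonneg fun i => by positivity

theorem IsBestSparseApprox.sum_norm_pow_le (h : IsBestSparseApprox q k y z) (hq : q ≠ 0)
    {S T : Finset ι} (hS : Function.support z ⊆ S) (hT : #T ≤ k) :
    ∑ i ∈ T, ‖y i‖ ^ q ≤ ∑ i ∈ S, ‖y i‖ ^ q := by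
  classical
  have hw : (Function.support ((T : Set ι).indicator y)).ncard ≤ k :=
    (Set.ncard_le_ncard Set.support_indicator_subset T.finite_toSet).trans
      ((Set.ncard_coe_finset T).trans_le hT)
  have hcompl : ∑ i ∈ Sᶜ, ‖y i‖ ^ q ≤ ∑ i ∈ Tᶜ, ‖y i‖ ^ q := by
    rw [← sum_norm_indicator_sub_pow hq T]
    exact (sum_compl_norm_pow_le_of_support_subset hS).trans (h.2 _ hw)
  linarith [sum_compl_add_sum S (‖y ·‖ ^ q), sum_compl_add_sum T (‖y ·‖ ^ q)]

theorem IsBestSparseApprox.support_eq_of_threshold {K : Finset ι} {c : ℝ}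
    (h : IsBestSparseApprox q #K y z) (hq : q ≠ 0) (hc : 0 ≤ c)
    (hout : ∀ i ∉ K, ‖y i‖ ≤ c) (hin : ∀ i ∈ K, c < ‖y i‖) :
    Function.support z = K := by
  obtain ⟨S, hS⟩ := (Function.support z).toFinite.exists_finset_coe
  have hcard : #S ≤ #K := by simpa only [← hS, Set.ncard_coe_finset] using h.1
  rw [← hS, coe_inj]
  by_contra hne
  refine (h.sum_norm_pow_le hq hS.ge le_rfl).not_gt
    (sum_lt_sum_of_card_le_of_threshold (pow_nonneg hc q) hcard hne ?_ ?_)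
  · exact fun i hi => pow_le_pow_left₀ (norm_nonneg _) (hout i hi) q
  · exact fun i hi => pow_lt_pow_left₀ (hin i hi) hc hq

theorem IsBestSparseApprox.support_eq_of_noise_le {x e : ι → E} {K : Finset ι} {c : ℝ}
    (h : IsBestSparseApprox q #K (x + e) z) (hq : q ≠ 0) (hc : 0 ≤ c)
    (hx : ∀ i ∉ K, x i = 0) (he : ∀ i, ‖e i‖ ≤ c) (hin : ∀ i ∈ K, 2 * c < ‖x i‖) :
    Function.support z = K := by
  refine h.support_eq_of_threshold hq hc (fun i hi => ?_) (fun i hi => ?_)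
  · simpa [hx i hi] using he i
  · rw [Pi.add_apply]
    linarith [norm_le_add_norm_add (x i) (e i), he i, hin i hi]

end SparseApproximation

section NoiseBound

theorem transpose_mul_apply_sq_le {m n l R : Type*} [Fintype m] [CommSemiring R] [LinearOrder R]
    [IsStrictOrderedRing R] [ExistsAddOfLE R] (A : Matrix m n R) (B : Matrix m l R)
    (i : n) (p : l) :
    (Aᵀ * B) i p ^ 2 ≤ (∑ j, A j i ^ 2) * ∑ j, B j p ^ 2 :=
  sum_mul_sq_le_sq_mul_sq univ (A · i) (B · p)

theorem abs_transpose_mul_apply_le {m n l : Type*} [Fintype m] {A : Matrix m n ℝ} {i : n}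
    (hA : (Aᵀ * A) i i = 1) (B : Matrix m l ℝ) (p : l) :
    |(Aᵀ * B) i p| ≤ √(∑ j, B j p ^ 2) := by
  have hcol : ∑ j, A j i ^ 2 = 1 := by simpa only [mul_apply, transpose_apply, sq] using hA
  refine Real.abs_le_sqrt ?_
  simpa only [hcol, one_mul] using transpose_mul_apply_sq_le A B i p

theorem euclideanSpace_norm_le_mul_sqrt_card {𝕜 n : Type*} [RCLike 𝕜] [Fintype n]
    {v : EuclideanSpace 𝕜 n} {c : ℝ} (hc : 0 ≤ c) (hv : ∀ p, ‖v p‖ ≤ c) :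
    ‖v‖ ≤ c * √(Fintype.card n) := by
  calc ‖v‖ = √(∑ p, ‖v p‖ ^ 2) := EuclideanSpace.norm_eq v
    _ ≤ √(∑ _p : n, c ^ 2) := by gcongr with p; exact hv p
    _ = c * √(Fintype.card n) := by simp [hc, mul_comm]

end NoiseBound

section Rows

/-- The family of rows of a real matrix, as vectors of the Euclidean space `ℝᴾ`, so that the row
`ℓ₂` norm is Mathlib's norm. -/
def euclideanRow {ι n : Type*} (A : Matrix ι n ℝ) : ι → EuclideanSpace ℝ n :=
  fun i => WithLp.toLp 2 (A i)

theorem euclideanRow_add {ι n : Type*} (A B : Matrix ι n ℝ) :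
    euclideanRow (A + B) = euclideanRow A + euclideanRow B :=
  rfl

theorem support_euclideanRow {ι n : Type*} (A : Matrix ι n ℝ) :
    Function.support (euclideanRow A) = {i | A i ≠ 0} := by
  ext i
  simp [euclideanRow]

theorem norm_euclideanRow {ι : Type*} {P : ℕ} (A : Matrix ι (Fin P) ℝ) (i : ι) :
    ‖euclideanRow A i‖ = rowNorm (A i) := by
  simp [euclideanRow, rowNorm, EuclideanSpace.norm_eq]

variable {N P : ℕ}

theorem froNorm_sub_eq_sqrt_sum_norm_sq (A B : Matrix (Fin N) (Fin P) ℝ) :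
    froNorm (A - B) = √(∑ i, ‖euclideanRow A i - euclideanRow B i‖ ^ 2) := by
  simp [froNorm, euclideanRow, EuclideanSpace.real_norm_sq_eq]

theorem isBestSparseApprox_euclideanRow {k : ℕ} {Y Z : Matrix (Fin N) (Fin P) ℝ}
    (hZ : {i | Z i ≠ 0}.ncard ≤ k)
    (hmin : ∀ W : Matrix (Fin N) (Fin P) ℝ, {i | W i ≠ 0}.ncard ≤ k →
      froNorm (Z - Y) ≤ froNorm (W - Y)) :
    IsBestSparseApprox 2 k (euclideanRow Y) (euclideanRow Z) := by
  refine ⟨by rwa [support_euclideanRow], fun w hw => ?_⟩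
  obtain ⟨W, rfl⟩ : ∃ W : Matrix (Fin N) (Fin P) ℝ, euclideanRow W = w :=
    ⟨fun i => WithLp.ofLp (w i), rfl⟩
  have hle := hmin W (by rwa [← support_euclideanRow])
  rwa [froNorm_sub_eq_sqrt_sum_norm_sq, froNorm_sub_eq_sqrt_sum_norm_sq,
    Real.sqrt_le_sqrt_iff (by positivity)] at hle

end Rows

theorem stmt1_general {m : Type*} [Fintype m] {N P : ℕ}
    (V : Matrix m (Fin N) ℝ) (hV : Vᵀ * V = 1) (K : Finset (Fin N))
    (Xb : Matrix (Fin N) (Fin P) ℝ) (hsupp : ∀ i, i ∉ K → Xb i = 0)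
    (Nn : Matrix m (Fin P) ℝ) (ε : ℝ) (hε : 0 ≤ ε)
    (hnoise : ∀ p, √(∑ j, Nn j p ^ 2) ≤ ε)
    (hmin : ∀ i ∈ K, 2 * ε * √P < rowNorm (Xb i))
    (Z : Matrix (Fin N) (Fin P) ℝ) (hZ : {i | Z i ≠ 0}.ncard ≤ #K)
    (hbest : ∀ W : Matrix (Fin N) (Fin P) ℝ, {i | W i ≠ 0}.ncard ≤ #K →
      froNorm (Z - Vᵀ * (V * Xb + Nn)) ≤ froNorm (W - Vᵀ * (V * Xb + Nn))) :
    {i | Z i ≠ 0} = (K : Set (Fin N)) := by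
  have hdata : Vᵀ * (V * Xb + Nn) = Xb + Vᵀ * Nn := by
    rw [Matrix.mul_add, ← Matrix.mul_assoc, hV, Matrix.one_mul]
  have hrow (i : Fin N) : ‖euclideanRow (Vᵀ * Nn) i‖ ≤ ε * √P := by
    have hunit : (Vᵀ * V) i i = 1 := by rw [hV, one_apply_eq]
    simpa only [Fintype.card_fin] using euclideanSpace_norm_le_mul_sqrt_card hε fun p =>
      (abs_transpose_mul_apply_le hunit Nn p).trans (hnoise p)
  have hZbest : IsBestSparseApprox 2 #K (euclideanRow Xb + euclideanRow (Vᵀ * Nn))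
      (euclideanRow Z) := by
    rw [← euclideanRow_add, ← hdata]
    exact isBestSparseApprox_euclideanRow hZ hbest
  rw [← support_euclideanRow]
  refine hZbest.support_eq_of_noise_le two_ne_zero (by positivity)
    (fun i hi => ?_) hrow (fun i hi => ?_)
  · rw [euclideanRow, hsupp i hi, WithLp.toLp_zero]
  · simpa only [norm_euclideanRow, mul_assoc] using hmin i hi

/-- Theorem 2 (identifiability form): under the SNR condition, every minimizer of
`‖Z − Ȳ‖_F` over matrices with at most `k` nonzero rows has nonzero-row support
exactly equal to `K`. -/
theorem stmt1 {N P k : ℕ} (hN : 0 < N) (hP : 0 < P)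
    (V : Matrix (Fin N) (Fin N) ℝ) (hV : Vᵀ * V = 1)
    (K : Finset (Fin N)) (hK : K.card = k)
    (Xb : Matrix (Fin N) (Fin P) ℝ) (hsupp : ∀ i, i ∉ K → Xb i = 0)
    (Nn : Matrix (Fin N) (Fin P) ℝ) (ε : ℝ) (hε : 0 ≤ ε)
    (hnoise : ∀ p, Real.sqrt (∑ i, Nn i p ^ 2) ≤ ε)
    (Yb : Matrix (Fin N) (Fin P) ℝ) (hYb : Yb = Vᵀ * (V * Xb + Nn))
    (hmin : ∀ i ∈ K, 2 * ε * Real.sqrt P < rowNorm (Xb i)) :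
    ∀ Z : Matrix (Fin N) (Fin P) ℝ,
      {i | Z i ≠ 0}.ncard ≤ k →
      (∀ W : Matrix (Fin N) (Fin P) ℝ, {i | W i ≠ 0}.ncard ≤ k →
        froNorm (Z - Yb) ≤ froNorm (W - Yb)) →
      {i | Z i ≠ 0} = (K : Set (Fin N)) := by
  subst hK hYb
  exact stmt1_general V hV K Xb hsupp Nn ε hε hnoise hmin
end
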